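/- (Proposition 1, part (a)) For all a, a' ∈ A with ρ_{a'} < 1, the Green's function of A ∪ B satisfies G_A(a,a') ≤ G_{A∪B}(a,a') ≤ G_A(a,a') + (ρ_a / (1 − ρ_{a'})) · G_A(a',a'). -/

import Mathlib

open MeasureTheory ENNReal

/-- The first hitting time of the set `D` along the path `s`, valued in `ℕ∞`
(`⊤` if the path never visits `D`). -/
noncomputable def hitTime {Ω : Type*} (D : Set Ω) (s : ℕ → Ω) : ℕ∞ :=
  ⨅ (k : ℕ) (_ : s k ∈ D), (k : ℕ∞)

/-- The path of the walk started at `x` with steps `ξ` : `S_n = x + ∑_{j<n} ξ j`. -/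
def walk {Ω : Type*} [AddCommGroup Ω] (x : Ω) (ξ : ℕ → Ω) (n : ℕ) : Ω :=
  x + ∑ j ∈ Finset.range n, ξ j

/-- A random walk on a group `Ω`, described by the common law `ν` of its i.i.d.
steps together with the joint law `μ` of the step sequence (characterized on
cylinder sets as the product of `ν`'s). -/
structure RandomWalk (Ω : Type*) [AddCommGroup Ω] [MeasurableSpace Ω] where
  ν : Measure Ω
  probν : IsProbabilityMeasure ν
  μ : Measure (ℕ → Ω)
  probμ : IsProbabilityMeasure μ
  iid : ∀ (n : ℕ) (f : Fin n → Ω),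
    μ {ξ | ∀ i : Fin n, ξ (i : ℕ) = f i} = ∏ i : Fin n, ν {f i}

variable {Ω : Type*} [AddCommGroup Ω] [MeasurableSpace Ω]

/-- `P^x(θ)` : the probability that the path `(S_n)` of the walk started at `x`
has the property `θ`. -/
noncomputable def RandomWalk.P (W : RandomWalk Ω) (x : Ω) (θ : Set (ℕ → Ω)) : ℝ≥0∞ :=
  W.μ {ξ | walk x ξ ∈ θ}

/-- `E^x(T_D)` : the expected hitting time of `D` for the walk started at `x`. -/
noncomputable def RandomWalk.E (W : RandomWalk Ω) (x : Ω) (D : Set Ω) : ℝ≥0∞ :=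
  ∫⁻ ξ, (hitTime D (walk x ξ) : ℝ≥0∞) ∂W.μ

/-- The truncated Green's function `G_D(x,y) = ∑_{j≥0} P^x(S_j = y, j < T_{Dᶜ})`. -/
noncomputable def RandomWalk.G (W : RandomWalk Ω) (D : Set Ω) (x y : Ω) : ℝ≥0∞ :=
  ∑' j : ℕ, W.P x {s | s j = y ∧ (j : ℕ∞) < hitTime Dᶜ s}

/-- The hitting distribution `H_D(x,y) = P^x(S_{T_D} = y)`. -/
noncomputable def RandomWalk.H (W : RandomWalk Ω) (D : Set Ω) (x y : Ω) : ℝ≥0∞ :=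
  W.P x {s | ∃ k : ℕ, hitTime D s = (k : ℕ∞) ∧ s k = y}

/-!
Fix `y ∈ A` and compare functions of the starting point `x`. First-step analysis shows that
`x ↦ G_D(x, y)` is the least nonnegative solution of `f ≥ 1_{y} + 𝔼 f(· + X₁)` on `D`; to bound it
by `f`, this inequality is only needed at the points where the bound is not already known. Taking
for `f` a constant, a multiple of `x ↦ P^x(T_A < T_C)`, and `G_A(·, y)` plus a multiple of `ρ` gives
in turn

* `G_{A∪B}(x, y) ≤ G_{A∪B}(y, y)`,
* `G_{A∪B}(x, y) ≤ G_{A∪B}(y, y) P^x(T_A < T_C)`,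
* `G_{A∪B}(x, y) ≤ G_A(x, y) + G_{A∪B}(y, y) ρ_x`.

Solving the last inequality at `x = y` for `G_{A∪B}(y, y)` requires that quantity to be finite, so
`G_{A∪B}` is replaced throughout by its sum over times `j < N`, and `N → ∞` only at the end.
-/

section Path

variable {α : Type*}

/-- The path that starts at `x` and then follows `s`. Conditioning on the first step of a walk
amounts to writing its path in this form. -/
def pathCons (x : α) (s : ℕ → α) : ℕ → α
  | 0 => x
  | n + 1 => s n

@[simp]
lemma pathCons_zero (x : α) (s : ℕ → α) : pathCons x s 0 = x := rfl

@[simp]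
lemma pathCons_succ (x : α) (s : ℕ → α) (n : ℕ) : pathCons x s (n + 1) = s n := rfl

lemma hitTime_eq_zero {D : Set α} {s : ℕ → α} : hitTime D s = 0 ↔ s 0 ∈ D := by
  simp [hitTime]

lemma hitTime_pathCons_of_notMem {D : Set α} {x : α} (hx : x ∉ D) (s : ℕ → α) :
    hitTime D (pathCons x s) = hitTime D s + 1 := by
  simp only [hitTime, ENat.iInf_add]
  rw [← inf_iInf_nat_succ]
  simp [hx]

lemma hitTime_anti {D D' : Set α} (h : D ⊆ D') (s : ℕ → α) : hitTime D' s ≤ hitTime D s :=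
  iInf_mono fun _ => iInf_mono' fun hk => ⟨h hk, le_rfl⟩

lemma measurable_pathCons [MeasurableSpace α] :
    Measurable (Function.uncurry (pathCons (α := α))) := by
  refine measurable_pi_lambda _ fun n => ?_
  cases n with
  | zero => exact measurable_fst
  | succ n => exact (measurable_pi_apply n).comp measurable_snd

lemma measurable_hitTime [MeasurableSpace α] {D : Set α} (hD : MeasurableSet D) :
    Measurable (hitTime D) := by
  classical
  have : BorelSpace ℕ∞ := ⟨borel_eq_top_of_countable.symm⟩
  refine Measurable.iInf fun k => ?_
  simp only [iInf_eq_if]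
  exact Measurable.ite (measurable_pi_apply k hD) measurable_const measurable_const

end Path

section Cylinder

variable {E : ℕ → Type*}

lemma isPiSystem_cylinders : IsPiSystem {S | ∃ (x : ∀ n, E n) (n : ℕ), S = PiNat.cylinder x n} := by
  rintro _ ⟨x, m, rfl⟩ _ ⟨y, n, rfl⟩ ⟨z, hzx, hzy⟩
  rw [← PiNat.mem_cylinder_iff_eq.mp hzx, ← PiNat.mem_cylinder_iff_eq.mp hzy]
  rcases le_total m n with h | h
  · exact ⟨z, n, Set.inter_eq_right.mpr (PiNat.cylinder_anti z h)⟩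
  · exact ⟨z, m, Set.inter_eq_left.mpr (PiNat.cylinder_anti z h)⟩

variable [∀ n, MeasurableSpace (E n)] [∀ n, MeasurableSingletonClass (E n)]

lemma measurableSet_cylinder (x : ∀ n, E n) (n : ℕ) : MeasurableSet (PiNat.cylinder x n) := by
  rw [PiNat.cylinder_eq_pi]
  exact .pi (Finset.countable_toSet _) fun i _ => measurableSet_singleton (x i)

variable [∀ n, Countable (E n)]

lemma generateFrom_cylinders :
    (MeasurableSpace.pi : MeasurableSpace (∀ n, E n)) =
      .generateFrom {S | ∃ (x : ∀ n, E n) (n : ℕ), S = PiNat.cylinder x n} := by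
  -- The cylinders form a basis of the product of the discrete topologies.
  let (n : ℕ) : TopologicalSpace (E n) := ⊥
  have (n : ℕ) : DiscreteTopology (E n) := ⟨rfl⟩
  exact (borel_eq_generateFrom_of_subbasis
    (PiNat.isTopologicalBasis_cylinders E).eq_generateFrom ▸ BorelSpace.measurable_eq)

lemma ext_of_cylinder {μ μ' : Measure (∀ n, E n)} [IsFiniteMeasure μ]
    (h : ∀ x n, μ (PiNat.cylinder x n) = μ' (PiNat.cylinder x n)) : μ = μ' := by
  refine ext_of_generate_finite _ generateFrom_cylinders isPiSystem_cylinders ?_ ?_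
  · rintro _ ⟨x, n, rfl⟩
    exact h x n
  · rcases isEmpty_or_nonempty (∀ n, E n) with _ | ⟨⟨x⟩⟩
    · simp [Set.eq_empty_of_isEmpty]
    · simpa using h x 0

end Cylinder

section Walk

variable {α : Type*} [AddCommGroup α]

@[simp]
lemma walk_zero (x : α) (ξ : ℕ → α) : walk x ξ 0 = x := by
  simp [walk]

lemma walk_pathCons (x z : α) (ξ : ℕ → α) :
    walk x (pathCons z ξ) = pathCons x (walk (x + z) ξ) := by
  funext n
  cases n with
  | zero => simp
  | succ n =>
    simp only [walk, pathCons_succ, Finset.sum_range_succ', pathCons_zero]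
    abel

lemma measurable_walk [MeasurableSpace α] [MeasurableAdd₂ α] (x : α) : Measurable (walk x) := by
  refine measurable_pi_lambda _ fun n => ?_
  unfold walk
  fun_prop

end Walk

attribute [instance] RandomWalk.probν RandomWalk.probμ

namespace RandomWalk

/-- The probability `P^x(S_j = y, j < T_{Dᶜ})` that the walk started at `x` is at `y` at time `j`
without having left `D`; these are the terms of the series `W.G D x y`. -/
noncomputable def killedProb (W : RandomWalk Ω) (D : Set Ω) (j : ℕ) (x y : Ω) : ℝ≥0∞ :=
  W.P x {s | s j = y ∧ (j : ℕ∞) < hitTime Dᶜ s}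

/-- The Green's function of `D` restricted to times `j < N`. Unlike `W.G D x y`, it is always
finite. -/
noncomputable def greenUpTo (W : RandomWalk Ω) (D : Set Ω) (N : ℕ) (x y : Ω) : ℝ≥0∞ :=
  ∑ j ∈ Finset.range N, W.killedProb D j x y

/-- The probability `P^x(T_A < T_C)`, which the paper writes `σ_x` when `x ∈ B`. -/
noncomputable def hitBefore (W : RandomWalk Ω) (A C : Set Ω) (x : Ω) : ℝ≥0∞ :=
  W.P x {s | hitTime A s < hitTime C s}

/-- The paper's `ρ_x = ∑_{b ∈ B} H_{B ∪ C}(x, b) σ_b`: the probability that the walk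
started at `x` first enters `B ∪ C` in `B` and from there hits `A` before `C`. -/
noncomputable def returnProb (W : RandomWalk Ω) (A B C : Set Ω) (x : Ω) : ℝ≥0∞ :=
  ∑' b : B, W.H (B ∪ C) x b * W.hitBefore A C b

variable (W : RandomWalk Ω)

lemma P_eq_one_of_forall {x : Ω} {θ : Set (ℕ → Ω)} (h : ∀ s : ℕ → Ω, s 0 = x → s ∈ θ) :
    W.P x θ = 1 := by
  simp [P, h _ (walk_zero x _)]

lemma P_eq_zero_of_forall {x : Ω} {θ : Set (ℕ → Ω)} (h : ∀ s : ℕ → Ω, s 0 = x → s ∉ θ) :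
    W.P x θ = 0 := by
  simp [P, h _ (walk_zero x _)]

lemma killedProb_of_notMem {D : Set Ω} {x : Ω} (hx : x ∉ D) (j : ℕ) (y : Ω) :
    W.killedProb D j x y = 0 := by
  refine W.P_eq_zero_of_forall ?_
  rintro s rfl ⟨-, h⟩
  simp [hitTime_eq_zero.mpr (Set.mem_compl hx)] at h

lemma killedProb_zero {D : Set Ω} {x : Ω} (hx : x ∈ D) (y : Ω) :
    W.killedProb D 0 x y = ({y} : Set Ω).indicator 1 x := by
  obtain rfl | hxy := eq_or_ne x y
  · rw [Set.indicator_of_mem (Set.mem_singleton x), Pi.one_apply]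
    refine W.P_eq_one_of_forall ?_
    rintro s rfl
    exact ⟨rfl, pos_iff_ne_zero.mpr (hitTime_eq_zero.not.mpr (Set.notMem_compl_iff.mpr hx))⟩
  · rw [Set.indicator_of_notMem (Set.notMem_singleton_iff.mpr hxy)]
    exact W.P_eq_zero_of_forall fun s hs h => hxy (hs.symm.trans h.1)

lemma killedProb_mono {D D' : Set Ω} (h : D ⊆ D') (j : ℕ) (x y : Ω) :
    W.killedProb D j x y ≤ W.killedProb D' j x y :=
  measure_mono fun _ hξ => ⟨hξ.1, hξ.2.trans_le (hitTime_anti (Set.compl_subset_compl.mpr h) _)⟩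

lemma G_mono {D D' : Set Ω} (h : D ⊆ D') (x y : Ω) : W.G D x y ≤ W.G D' x y :=
  ENNReal.tsum_le_tsum fun j => W.killedProb_mono h j x y

lemma G_eq_iSup_greenUpTo (D : Set Ω) (x y : Ω) : W.G D x y = ⨆ N, W.greenUpTo D N x y :=
  ENNReal.tsum_eq_iSup_nat

lemma greenUpTo_mono (D : Set Ω) (x y : Ω) : Monotone fun N => W.greenUpTo D N x y :=
  fun _ _ h => Finset.sum_le_sum_of_subset (Finset.range_mono h)

lemma greenUpTo_ne_top (D : Set Ω) (N : ℕ) (x y : Ω) : W.greenUpTo D N x y ≠ ∞ :=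
  ENNReal.sum_ne_top.mpr fun _ _ => measure_ne_top _ _

lemma greenUpTo_of_notMem {D : Set Ω} {x : Ω} (hx : x ∉ D) (N : ℕ) (y : Ω) :
    W.greenUpTo D N x y = 0 :=
  Finset.sum_eq_zero fun j _ => W.killedProb_of_notMem hx j y

lemma H_self {D : Set Ω} {x : Ω} (hx : x ∈ D) : W.H D x x = 1 := by
  refine W.P_eq_one_of_forall ?_
  rintro s rfl
  exact ⟨0, hitTime_eq_zero.mpr hx, rfl⟩

lemma hitBefore_of_mem {A C : Set Ω} {x : Ω} (hA : x ∈ A) (hC : x ∉ C) :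
    W.hitBefore A C x = 1 := by
  refine W.P_eq_one_of_forall ?_
  rintro s rfl
  change hitTime A s < hitTime C s
  rw [hitTime_eq_zero.mpr hA]
  exact pos_iff_ne_zero.mpr (hitTime_eq_zero.not.mpr hC)

lemma hitBefore_le_returnProb (A C : Set Ω) {B : Set Ω} {x : Ω} (hx : x ∈ B) :
    W.hitBefore A C x ≤ W.returnProb A B C x := by
  simpa [returnProb, W.H_self (Set.mem_union_left C hx)] using
    ENNReal.le_tsum (f := fun b : B => W.H (B ∪ C) x b * W.hitBefore A C b) ⟨x, hx⟩

section FirstStep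

variable [Countable Ω] [MeasurableSingletonClass Ω]

lemma map_pathCons_prod : (W.ν.prod W.μ).map (Function.uncurry pathCons) = W.μ := by
  have : IsProbabilityMeasure ((W.ν.prod W.μ).map (Function.uncurry pathCons)) :=
    Measure.isProbabilityMeasure_map measurable_pathCons.aemeasurable
  have cylinder_prob (x : ℕ → Ω) (n : ℕ) :
      W.μ (PiNat.cylinder x n) = ∏ i : Fin n, W.ν {x i} := by
    rw [← W.iid]
    congr 1
    ext ξ
    simp [Fin.forall_iff]
  refine ext_of_cylinder fun x n => ?_
  rw [Measure.map_apply measurable_pathCons (measurableSet_cylinder x n), cylinder_prob]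
  cases n with
  | zero => simp
  | succ n =>
    have cons_mem_cylinder : Function.uncurry pathCons ⁻¹' PiNat.cylinder x (n + 1) =
        {x 0} ×ˢ PiNat.cylinder (fun k => x (k + 1)) n := by
      ext ⟨z, ξ⟩
      simp [-Order.lt_add_one_iff, Nat.forall_lt_succ_left]
    rw [cons_mem_cylinder, Measure.prod_prod, cylinder_prob, Fin.prod_univ_succ]
    rfl

theorem P_eq_lintegral (x : Ω) {θ : Set (ℕ → Ω)} (hθ : MeasurableSet θ) :
    W.P x θ = ∫⁻ z, W.P (x + z) (pathCons x ⁻¹' θ) ∂W.ν := by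
  have hm : MeasurableSet (walk x ⁻¹' θ) := measurable_walk x hθ
  calc W.P x θ
    _ = (W.ν.prod W.μ).map (Function.uncurry pathCons) (walk x ⁻¹' θ) := by
      rw [map_pathCons_prod]; rfl
    _ = ∫⁻ z, W.P (x + z) (pathCons x ⁻¹' θ) ∂W.ν := by
      rw [Measure.map_apply measurable_pathCons hm, Measure.prod_apply (measurable_pathCons hm)]
      simp only [P, Set.preimage, Function.uncurry, walk_pathCons, Set.mem_ofPred_eq]

lemma killedProb_succ {D : Set Ω} {x : Ω} (hx : x ∈ D) (j : ℕ) (y : Ω) :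
    W.killedProb D (j + 1) x y = ∫⁻ z, W.killedProb D j (x + z) y ∂W.ν := by
  unfold killedProb
  rw [P_eq_lintegral]
  · simp [hitTime_pathCons_of_notMem (Set.notMem_compl_iff.mpr hx)]
  · exact (measurable_pi_apply (j + 1) (measurableSet_singleton y)).inter
      (measurable_hitTime .of_discrete (.of_discrete (s := Set.Ioi ((j + 1 : ℕ) : ℕ∞))))

lemma H_eq_lintegral {D : Set Ω} {x : Ω} (hx : x ∉ D) (y : Ω) :
    W.H D x y = ∫⁻ z, W.H D (x + z) y ∂W.ν := by
  unfold H
  rw [P_eq_lintegral]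
  · have pathCons_mem (s : ℕ → Ω) :
        (∃ k : ℕ, hitTime D (pathCons x s) = k ∧ pathCons x s k = y) ↔
          ∃ k : ℕ, hitTime D s = k ∧ s k = y := by
      rw [← Nat.or_exists_add_one]
      simp [hitTime_pathCons_of_notMem hx]
    simp only [Set.preimage_ofPred_eq, pathCons_mem]
  · rw [Set.ofPred_exists]
    exact MeasurableSet.iUnion fun k =>
      (measurable_hitTime .of_discrete (measurableSet_singleton (k : ℕ∞))).inter
        (measurable_pi_apply (X := fun _ => Ω) k (measurableSet_singleton y))

lemma hitBefore_eq_lintegral {A C : Set Ω} {x : Ω} (hA : x ∉ A) (hC : x ∉ C) :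
    W.hitBefore A C x = ∫⁻ z, W.hitBefore A C (x + z) ∂W.ν := by
  unfold hitBefore
  rw [P_eq_lintegral]
  · simp [hitTime_pathCons_of_notMem, hA, hC]
  · exact (measurable_hitTime .of_discrete).prodMk (measurable_hitTime .of_discrete)
      (.of_discrete (s := {t : ℕ∞ × ℕ∞ | t.1 < t.2}))

lemma returnProb_eq_lintegral {B C : Set Ω} {x : Ω} (A : Set Ω) (hx : x ∉ B ∪ C) :
    W.returnProb A B C x = ∫⁻ z, W.returnProb A B C (x + z) ∂W.ν := by
  unfold returnProb
  rw [lintegral_tsum fun _ => Measurable.of_discrete.aemeasurable]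
  refine tsum_congr fun b => ?_
  rw [lintegral_mul_const _ Measurable.of_discrete, W.H_eq_lintegral hx]

lemma G_eq_indicator_add_lintegral {D : Set Ω} {x : Ω} (hx : x ∈ D) (y : Ω) :
    W.G D x y = ({y} : Set Ω).indicator 1 x + ∫⁻ z, W.G D (x + z) y ∂W.ν := by
  calc W.G D x y
    _ = W.killedProb D 0 x y + ∑' j, W.killedProb D (j + 1) x y :=
      tsum_eq_zero_add' ENNReal.summable
    _ = ({y} : Set Ω).indicator 1 x + ∑' j, ∫⁻ z, W.killedProb D j (x + z) y ∂W.ν := by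
      simp only [W.killedProb_zero hx, W.killedProb_succ hx]
    _ = ({y} : Set Ω).indicator 1 x + ∫⁻ z, W.G D (x + z) y ∂W.ν := by
      rw [← lintegral_tsum fun _ => Measurable.of_discrete.aemeasurable]
      rfl

lemma greenUpTo_succ {D : Set Ω} {x : Ω} (hx : x ∈ D) (N : ℕ) (y : Ω) :
    W.greenUpTo D (N + 1) x y =
      ({y} : Set Ω).indicator 1 x + ∫⁻ z, W.greenUpTo D N (x + z) y ∂W.ν := by
  simp only [greenUpTo, Finset.sum_range_succ', W.killedProb_zero hx, W.killedProb_succ hx]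
  rw [add_comm, lintegral_finsetSum _ fun _ _ => Measurable.of_discrete]

-- The Green's function is the least `f` with `1_{y} + ∫ f(· + z) dν(z) ≤ f` on `D`. The first
-- alternative admits an `f` that violates this inequality at some points, such as `y` itself.
lemma greenUpTo_le_of_superharmonic {D : Set Ω} {N : ℕ} {y : Ω} {f : Ω → ℝ≥0∞}
    (hf : ∀ x ∈ D, W.greenUpTo D N x y ≤ f x ∨
      ({y} : Set Ω).indicator 1 x + ∫⁻ z, f (x + z) ∂W.ν ≤ f x) (x : Ω) :
    W.greenUpTo D N x y ≤ f x := by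
  suffices ∀ n ≤ N, ∀ x, W.greenUpTo D n x y ≤ f x from this N le_rfl x
  intro n
  induction n with
  | zero => simp [greenUpTo]
  | succ n ih =>
    intro hn x
    by_cases hx : x ∈ D
    · rcases hf x hx with h | h
      · exact (W.greenUpTo_mono D x y hn).trans h
      · rw [W.greenUpTo_succ hx]
        refine le_trans ?_ h
        gcongr with z
        exact ih (by lia) (x + z)
    · simp [W.greenUpTo_of_notMem hx]

lemma greenUpTo_le_greenUpTo_self (D : Set Ω) (N : ℕ) (x y : Ω) :
    W.greenUpTo D N x y ≤ W.greenUpTo D N y y := by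
  refine W.greenUpTo_le_of_superharmonic (f := fun _ => W.greenUpTo D N y y) (fun x _ => ?_) x
  by_cases hxy : x = y
  · exact .inl (hxy ▸ le_rfl)
  · exact .inr (by simp [hxy])

lemma greenUpTo_le_mul_hitBefore {A C D : Set Ω} (hDC : Disjoint D C) {y : Ω} (hy : y ∈ A)
    (N : ℕ) (x : Ω) :
    W.greenUpTo D N x y ≤ W.greenUpTo D N y y * W.hitBefore A C x := by
  refine W.greenUpTo_le_of_superharmonic
    (f := fun x => W.greenUpTo D N y y * W.hitBefore A C x) (fun x hx => ?_) x
  have hC : x ∉ C := Set.disjoint_left.mp hDC hx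
  by_cases hA : x ∈ A
  · left
    rw [W.hitBefore_of_mem hA hC, mul_one]
    exact W.greenUpTo_le_greenUpTo_self D N x y
  · right
    have hxy : x ≠ y := fun h => hA (h ▸ hy)
    rw [lintegral_const_mul _ Measurable.of_discrete, ← W.hitBefore_eq_lintegral hA hC]
    simp [hxy]

lemma greenUpTo_union_le {A B C : Set Ω} (hAC : Disjoint A C) (hBC : Disjoint B C) {y : Ω}
    (hy : y ∈ A) (N : ℕ) (x : Ω) :
    W.greenUpTo (A ∪ B) N x y ≤
      W.G A x y + W.greenUpTo (A ∪ B) N y y * W.returnProb A B C x := by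
  refine W.greenUpTo_le_of_superharmonic
    (f := fun x => W.G A x y + W.greenUpTo (A ∪ B) N y y * W.returnProb A B C x)
    (fun x hx => ?_) x
  by_cases hB : x ∈ B
  · left
    calc W.greenUpTo (A ∪ B) N x y
      _ ≤ W.greenUpTo (A ∪ B) N y y * W.hitBefore A C x :=
        W.greenUpTo_le_mul_hitBefore (Set.disjoint_union_left.mpr ⟨hAC, hBC⟩) hy N x
      _ ≤ W.greenUpTo (A ∪ B) N y y * W.returnProb A B C x := by
        gcongr
        exact W.hitBefore_le_returnProb A C hB
      _ ≤ _ := le_add_self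
  · right
    have hA : x ∈ A := hx.resolve_right hB
    have hBC' : x ∉ B ∪ C := by
      rintro (h | h)
      exacts [hB h, Set.disjoint_left.mp hAC hA h]
    rw [lintegral_add_left Measurable.of_discrete, lintegral_const_mul _ Measurable.of_discrete,
      ← W.returnProb_eq_lintegral A hBC', ← add_assoc, ← W.G_eq_indicator_add_lintegral hA]

lemma greenUpTo_union_self_le {A B C : Set Ω} (hAC : Disjoint A C) (hBC : Disjoint B C) {y : Ω}
    (hy : y ∈ A) (hρ : W.returnProb A B C y < 1) (N : ℕ) :
    W.greenUpTo (A ∪ B) N y y ≤ W.G A y y / (1 - W.returnProb A B C y) := by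
  have finite := W.greenUpTo_ne_top (A ∪ B) N y y
  rw [ENNReal.le_div_iff_mul_le (.inl (tsub_pos_of_lt hρ).ne')
    (.inl (ENNReal.sub_ne_top one_ne_top)), ENNReal.mul_sub fun _ _ => finite, mul_one]
  exact tsub_le_iff_right.mpr (W.greenUpTo_union_le hAC hBC hy N y)

end FirstStep

end RandomWalk

theorem prop1a_general [Countable Ω] [MeasurableSingletonClass Ω] (W : RandomWalk Ω)
    {A B C : Set Ω} (hAC : Disjoint A C) (hBC : Disjoint B C) (a : Ω) {a' : Ω} (ha' : a' ∈ A)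
    {ρ : Ω → ℝ≥0∞}
    (hρdef : ∀ x, ρ x = ∑' b' : B,
      W.H (B ∪ C) x b' * W.P b' {s | hitTime A s < hitTime C s})
    (hρ : ρ a' < 1) :
    W.G A a a' ≤ W.G (A ∪ B) a a' ∧
      W.G (A ∪ B) a a' ≤ W.G A a a' + (ρ a / (1 - ρ a')) * W.G A a' a' := by
  obtain rfl : ρ = W.returnProb A B C := funext hρdef
  refine ⟨W.G_mono Set.subset_union_left a a', ?_⟩
  rw [W.G_eq_iSup_greenUpTo (A ∪ B)]
  refine iSup_le fun N => ?_
  calc W.greenUpTo (A ∪ B) N a a'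
    _ ≤ W.G A a a' + W.greenUpTo (A ∪ B) N a' a' * W.returnProb A B C a :=
      W.greenUpTo_union_le hAC hBC ha' N a
    _ ≤ W.G A a a' +
        W.G A a' a' / (1 - W.returnProb A B C a') * W.returnProb A B C a := by
      gcongr
      exact W.greenUpTo_union_self_le hAC hBC ha' hρ N
    _ = W.G A a a' +
        W.returnProb A B C a / (1 - W.returnProb A B C a') * W.G A a' a' := by
      simp only [div_eq_mul_inv]
      ring

/-- Proposition 1, part (a): for `a, a' ∈ A` with `ρ_{a'} < 1`,
`G_A(a,a') ≤ G_{A∪B}(a,a') ≤ G_A(a,a') + (ρ_a/(1-ρ_{a'})) G_A(a',a')`. -/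
theorem prop1a
    {Ω : Type*} [AddCommGroup Ω] [Countable Ω] [MeasurableSpace Ω]
    [MeasurableSingletonClass Ω] (W : RandomWalk Ω) (A B C : Set Ω)
    (hcover : A ∪ B ∪ C = Set.univ) (hAB : Disjoint A B) (hAC : Disjoint A C)
    (hBC : Disjoint B C) (a a' : Ω) (ha : a ∈ A) (ha' : a' ∈ A)
    (ρ : Ω → ℝ≥0∞)
    (hρdef : ∀ x, ρ x = ∑' b' : B,
      W.H (B ∪ C) x b' * W.P b' {s | hitTime A s < hitTime C s})
    (hρ : ρ a' < 1) :
    W.G A a a' ≤ W.G (A ∪ B) a a' ∧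
      W.G (A ∪ B) a a' ≤ W.G A a a' + (ρ a / (1 - ρ a')) * W.G A a' a' :=
  prop1a_general W hAC hBC a ha' hρdef hρ
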